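/- If 0<d<d̃≤1, then φ̄_d(x₂)>φ̄_{d̃}(x₂) for every x₂∈(0,d). -/

import Mathlib

open Real Set MeasureTheory

noncomputable section

/-- `φ` solves the boundary value problem `φ'' = f(φ)` on `(0,d)`, `φ(0) = 0`,
`φ(d) = Q`, `0 < φ < Q` on `(0,d)`, with `φ ∈ C²((0,d)) ∩ C¹([0,d])`. -/
def IsBVPSol (Q : ℝ) (f : ℝ → ℝ) (d : ℝ) (φ : ℝ → ℝ) : Prop :=
  ContDiffOn ℝ 1 φ (Set.Icc 0 d) ∧ ContDiffOn ℝ 2 φ (Set.Ioo 0 d) ∧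
  (∀ x ∈ Set.Ioo (0 : ℝ) d, deriv (deriv φ) x = f (φ x)) ∧
  φ 0 = 0 ∧ φ d = Q ∧ (∀ x ∈ Set.Ioo (0 : ℝ) d, 0 < φ x ∧ φ x < Q)

/-!
Read `φ'' = f(φ)` as the motion of a particle in a force field. The kinetic energies of two
increasing solutions, viewed as functions of the level `s = φ(x)`, have the same derivative `f(s)`
and thus differ by a constant, so one of the two motions is the faster one at all levels. The one
that covers the distance in the shorter time must be strictly faster, and having started together
with the other it stays ahead of it.

That solutions of the boundary value problem are increasing is conservation of energy once more:
`φ̄₁` is a motion starting from rest, so its kinetic energy at level `s` is the work done by `f`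
between the levels `0` and `s`. This work is positive, hence no solution starting at level `0` comes
to rest before it reaches level `Q`.
-/

open Filter Topology

section LeftInverse

theorem continuousOn_image_of_leftInvOn_of_isCompact {X Y : Type*} [TopologicalSpace X]
    [TopologicalSpace Y] [T2Space Y] {u : X → Y} {w : Y → X} {K : Set X}
    (hw : LeftInvOn w u K) (hK : IsCompact K) (hu : ContinuousOn u K) :
    ContinuousOn w (u '' K) := by
  refine continuousOn_iff_isClosed.2 fun C hC => ⟨u '' (K ∩ C), ?_, ?_⟩
  · exact ((hK.inter_right hC).image_of_continuousOn (hu.mono inter_subset_left)).isClosed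
  · rw [inter_comm K, hw.image_inter', inter_assoc, inter_self]

section Order

variable {α β : Type*} [ConditionallyCompleteLinearOrder α] [TopologicalSpace α] [OrderTopology α]
  [DenselyOrdered α] [LinearOrder β] [TopologicalSpace β] [OrderClosedTopology β]
  {u : α → β} {w : β → α} {a b : α}

theorem continuousOn_Icc_of_leftInvOn (hw : LeftInvOn w u (Icc a b)) (hab : a ≤ b)
    (hu : ContinuousOn u (Icc a b)) : ContinuousOn w (Icc (u a) (u b)) :=
  (continuousOn_image_of_leftInvOn_of_isCompact hw isCompact_Icc hu).mono
    (intermediate_value_Icc hab hu)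

theorem mapsTo_Ioo_of_leftInvOn (hw : LeftInvOn w u (Icc a b)) (hab : a ≤ b)
    (hu : ContinuousOn u (Icc a b)) : MapsTo w (Ioo (u a) (u b)) (Ioo a b) := by
  intro s hs
  obtain ⟨t, ht, rfl⟩ := intermediate_value_Ioo hab hu hs
  rwa [hw (Ioo_subset_Icc_self ht)]

theorem rightInvOn_Ioo_of_leftInvOn (hw : LeftInvOn w u (Icc a b)) (hab : a ≤ b)
    (hu : ContinuousOn u (Icc a b)) : RightInvOn w u (Ioo (u a) (u b)) := by
  intro s hs
  obtain ⟨t, ht, rfl⟩ := intermediate_value_Ioo hab hu hs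
  rw [hw (Ioo_subset_Icc_self ht)]

end Order

theorem hasDerivAt_of_leftInvOn {u w : ℝ → ℝ} {a b s u' : ℝ}
    (hw : LeftInvOn w u (Icc a b)) (hab : a ≤ b) (hu : ContinuousOn u (Icc a b))
    (hs : s ∈ Ioo (u a) (u b)) (hu' : HasDerivAt u u' (w s)) (h0 : u' ≠ 0) :
    HasDerivAt w u'⁻¹ s := by
  have hw_cont : ContinuousAt w s :=
    (continuousOn_Icc_of_leftInvOn hw hab hu).continuousAt (Icc_mem_nhds hs.1 hs.2)
  refine hu'.of_local_left_inverse hw_cont h0 ?_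
  filter_upwards [Ioo_mem_nhds hs.1 hs.2] with y hy
  exact rightInvOn_Ioo_of_leftInvOn hw hab hu hy

end LeftInverse

/-- The increasing function `u` solves `u'' = f(u)` on `(a, b)` and moves from level `p` at time `a`
to level `q` at time `b`; its inverse `τ` gives the time at which each level is passed. The values
of `τ` outside `[p, q]` are irrelevant; `u` is differentiable on `(a, b)` because
`deriv u x` would otherwise be `0`. -/
structure IsPassage (f u τ : ℝ → ℝ) (a b p q : ℝ) : Prop where
  lt : a < b
  map_left : u a = p
  map_right : u b = q
  leftInvOn : LeftInvOn τ u (Icc a b)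
  continuousOn : ContinuousOn u (Icc a b)
  deriv_pos : ∀ x ∈ Ioo a b, 0 < deriv u x
  hasDerivAt_deriv : ∀ x ∈ Ioo a b, HasDerivAt (deriv u) (f (u x)) x

/-- The kinetic energy `u'² / 2` of the motion `u` as a function of the level, where `τ` gives the
time at which `u` passes each level. -/
def kineticEnergy (u τ : ℝ → ℝ) (s : ℝ) : ℝ := deriv u (τ s) ^ 2 / 2

/-- The work `F - F(p)` done by the force `f` from level `p` on is positive at all levels in
`(p, q)`. -/
structure IsPositiveWork (F f : ℝ → ℝ) (p q : ℝ) : Prop where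
  hasDerivAt : ∀ s ∈ Ioo p q, HasDerivAt F (f s) s
  continuousWithinAt : ContinuousWithinAt F (Ioo p q) p
  lt : ∀ s ∈ Ioo p q, F p < F s

namespace IsPassage

variable {f u v τ σ : ℝ → ℝ} {a b a' b' p q s x : ℝ}

theorem strictMonoOn (hu : IsPassage f u τ a b p q) : StrictMonoOn u (Icc a b) :=
  strictMonoOn_of_deriv_pos (convex_Icc a b) hu.continuousOn (by simpa using hu.deriv_pos)

theorem mapsTo (hu : IsPassage f u τ a b p q) : MapsTo u (Ioo a b) (Ioo p q) := by
  intro x hx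
  rw [← hu.map_left, ← hu.map_right]
  exact ⟨hu.strictMonoOn (left_mem_Icc.2 hu.lt.le) (Ioo_subset_Icc_self hx) hx.1,
    hu.strictMonoOn (Ioo_subset_Icc_self hx) (right_mem_Icc.2 hu.lt.le) hx.2⟩

theorem level_lt (hu : IsPassage f u τ a b p q) : p < q := by
  rw [← hu.map_left, ← hu.map_right]
  exact hu.strictMonoOn (left_mem_Icc.2 hu.lt.le) (right_mem_Icc.2 hu.lt.le) hu.lt

theorem time_left (hu : IsPassage f u τ a b p q) : τ p = a := by
  rw [← hu.map_left, hu.leftInvOn (left_mem_Icc.2 hu.lt.le)]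

theorem time_right (hu : IsPassage f u τ a b p q) : τ q = b := by
  rw [← hu.map_right, hu.leftInvOn (right_mem_Icc.2 hu.lt.le)]

theorem mapsTo_time (hu : IsPassage f u τ a b p q) : MapsTo τ (Ioo p q) (Ioo a b) := by
  have h := mapsTo_Ioo_of_leftInvOn hu.leftInvOn hu.lt.le hu.continuousOn
  rwa [hu.map_left, hu.map_right] at h

theorem rightInvOn (hu : IsPassage f u τ a b p q) : RightInvOn τ u (Ioo p q) := by
  have h := rightInvOn_Ioo_of_leftInvOn hu.leftInvOn hu.lt.le hu.continuousOn
  rwa [hu.map_left, hu.map_right] at h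

theorem continuousOn_time (hu : IsPassage f u τ a b p q) : ContinuousOn τ (Icc p q) := by
  have h := continuousOn_Icc_of_leftInvOn hu.leftInvOn hu.lt.le hu.continuousOn
  rwa [hu.map_left, hu.map_right] at h

theorem deriv_time_pos (hu : IsPassage f u τ a b p q) (hs : s ∈ Ioo p q) : 0 < deriv u (τ s) :=
  hu.deriv_pos (τ s) (hu.mapsTo_time hs)

theorem hasDerivAt_time (hu : IsPassage f u τ a b p q) (hs : s ∈ Ioo p q) :
    HasDerivAt τ (deriv u (τ s))⁻¹ s := by
  have h_ne : deriv u (τ s) ≠ 0 := (hu.deriv_time_pos hs).ne'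
  refine hasDerivAt_of_leftInvOn hu.leftInvOn hu.lt.le hu.continuousOn ?_
    (differentiableAt_of_deriv_ne_zero h_ne).hasDerivAt h_ne
  rwa [hu.map_left, hu.map_right]

theorem hasDerivAt_kineticEnergy (hu : IsPassage f u τ a b p q) (hs : s ∈ Ioo p q) :
    HasDerivAt (kineticEnergy u τ) (f s) s := by
  have h_speed : HasDerivAt (fun s => deriv u (τ s)) (f s * (deriv u (τ s))⁻¹) s := by
    have h := hu.hasDerivAt_deriv (τ s) (hu.mapsTo_time hs)
    rw [hu.rightInvOn hs] at h
    exact h.comp s (hu.hasDerivAt_time hs)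
  have h_ne : deriv u (τ s) ≠ 0 := (hu.deriv_time_pos hs).ne'
  refine ((h_speed.pow 2).div_const 2).congr_deriv ?_
  field_simp
  ring

theorem isPositiveWork_kineticEnergy (hu : IsPassage f u τ a b p q) (h_rest : deriv u a = 0)
    (h_cont : ContinuousWithinAt (deriv u) (Ioo a b) a) :
    IsPositiveWork (kineticEnergy u τ) f p q where
  hasDerivAt _ hs := hu.hasDerivAt_kineticEnergy hs
  continuousWithinAt := by
    have hτ : ContinuousWithinAt τ (Ioo p q) p :=
      (hu.continuousOn_time p (left_mem_Icc.2 hu.level_lt.le)).mono Ioo_subset_Icc_self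
    exact ((h_cont.comp_of_eq hτ hu.mapsTo_time hu.time_left).pow 2).div_const 2
  lt s hs := by
    have h_pos := hu.deriv_time_pos hs
    rw [kineticEnergy, hu.time_left, h_rest, zero_pow two_ne_zero, zero_div, kineticEnergy]
    positivity

theorem exists_kineticEnergy_eq_add (hu : IsPassage f u τ a b p q)
    (hv : IsPassage f v σ a' b' p q) :
    ∃ c, EqOn (kineticEnergy u τ) (kineticEnergy v σ · + c) (Ioo p q) :=
  isOpen_Ioo.exists_eq_add_of_deriv_eq isPreconnected_Ioo
    (fun _ hs => (hu.hasDerivAt_kineticEnergy hs).differentiableAt.differentiableWithinAt)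
    (fun _ hs => (hv.hasDerivAt_kineticEnergy hs).differentiableAt.differentiableWithinAt)
    (fun _ hs => (hu.hasDerivAt_kineticEnergy hs).deriv.trans
      (hv.hasDerivAt_kineticEnergy hs).deriv.symm)

theorem monotoneOn_time_sub_time (hu : IsPassage f u τ a b p q) (hv : IsPassage f v σ a' b' p q)
    (h : ∀ s ∈ Ioo p q, kineticEnergy v σ s ≤ kineticEnergy u τ s) :
    MonotoneOn (σ - τ) (Icc p q) := by
  refine monotoneOn_of_hasDerivWithinAt_nonneg (convex_Icc p q)
    (hv.continuousOn_time.sub hu.continuousOn_time)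
    (f' := fun s => (deriv v (σ s))⁻¹ - (deriv u (τ s))⁻¹) ?_ ?_ <;> rw [interior_Icc]
  · exact fun s hs => ((hv.hasDerivAt_time hs).sub (hu.hasDerivAt_time hs)).hasDerivWithinAt
  · intro s hs
    have h_speed : deriv v (σ s) ≤ deriv u (τ s) :=
      (sq_le_sq₀ (hv.deriv_time_pos hs).le (hu.deriv_time_pos hs).le).1
        ((div_le_div_iff_of_pos_right two_pos).1 (h s hs))
    exact sub_nonneg.2 (inv_anti₀ (hv.deriv_time_pos hs) h_speed)

theorem strictMonoOn_time_sub_time (hu : IsPassage f u τ a b p q)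
    (hv : IsPassage f v σ a' b' p q)
    (h : ∀ s ∈ Ioo p q, kineticEnergy v σ s < kineticEnergy u τ s) :
    StrictMonoOn (σ - τ) (Icc p q) := by
  refine strictMonoOn_of_hasDerivWithinAt_pos (convex_Icc p q)
    (hv.continuousOn_time.sub hu.continuousOn_time)
    (f' := fun s => (deriv v (σ s))⁻¹ - (deriv u (τ s))⁻¹) ?_ ?_ <;> rw [interior_Icc]
  · exact fun s hs => ((hv.hasDerivAt_time hs).sub (hu.hasDerivAt_time hs)).hasDerivWithinAt
  · intro s hs
    have h_speed : deriv v (σ s) < deriv u (τ s) :=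
      (sq_lt_sq₀ (hv.deriv_time_pos hs).le (hu.deriv_time_pos hs).le).1
        ((div_lt_div_iff_of_pos_right two_pos).1 (h s hs))
    exact sub_pos.2 (inv_strictAnti₀ (hv.deriv_time_pos hs) h_speed)

theorem kineticEnergy_lt_of_right_lt (hu : IsPassage f u τ a b p q)
    (hv : IsPassage f v σ a b' p q) (hbb' : b < b') :
    ∀ s ∈ Ioo p q, kineticEnergy v σ s < kineticEnergy u τ s := by
  obtain ⟨c, hc⟩ := hu.exists_kineticEnergy_eq_add hv
  suffices hc_pos : 0 < c from fun s hs => by simpa only [hc hs] using lt_add_of_pos_right _ hc_pos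
  by_contra! hc_nonpos
  have h_mono : MonotoneOn (τ - σ) (Icc p q) := hv.monotoneOn_time_sub_time hu fun s hs => by
    simpa only [hc hs] using add_le_of_nonpos_right hc_nonpos
  have h_le := h_mono (left_mem_Icc.2 hu.level_lt.le) (right_mem_Icc.2 hu.level_lt.le)
    hu.level_lt.le
  simp only [Pi.sub_apply, hu.time_left, hv.time_left, hu.time_right, hv.time_right] at h_le
  linarith

theorem time_lt_time_of_right_lt (hu : IsPassage f u τ a b p q)
    (hv : IsPassage f v σ a b' p q) (hbb' : b < b') (hs : s ∈ Ioo p q) : τ s < σ s := by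
  have h := hu.strictMonoOn_time_sub_time hv (hu.kineticEnergy_lt_of_right_lt hv hbb')
    (left_mem_Icc.2 hu.level_lt.le) (Ioo_subset_Icc_self hs) hs.1
  simpa only [Pi.sub_apply, hu.time_left, hv.time_left, sub_self, sub_pos] using h

theorem lt_of_right_lt (hu : IsPassage f u τ a b p q) (hv : IsPassage f v σ a b' p q)
    (hbb' : b < b') (hx : x ∈ Ioo a b) : v x < u x := by
  have h_time : x < σ (u x) := by
    have h := hu.time_lt_time_of_right_lt hv hbb' (hu.mapsTo hx)
    rwa [hu.leftInvOn (Ioo_subset_Icc_self hx)] at h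
  calc v x < v (σ (u x)) :=
        hv.strictMonoOn ⟨hx.1.le, (hx.2.trans hbb').le⟩
          (Ioo_subset_Icc_self (hv.mapsTo_time (hu.mapsTo hx))) h_time
    _ = u x := hv.rightInvOn (hu.mapsTo hx)

end IsPassage

namespace IsBVPSol

variable {Q d x : ℝ} {f F φ : ℝ → ℝ}

theorem continuousOn (h : IsBVPSol Q f d φ) : ContinuousOn φ (Icc 0 d) := h.1.continuousOn

theorem map_zero (h : IsBVPSol Q f d φ) : φ 0 = 0 := h.2.2.2.1

theorem map_right (h : IsBVPSol Q f d φ) : φ d = Q := h.2.2.2.2.1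

theorem mapsTo (h : IsBVPSol Q f d φ) : MapsTo φ (Ioo 0 d) (Ioo 0 Q) := h.2.2.2.2.2

theorem hasDerivAt (h : IsBVPSol Q f d φ) (hx : x ∈ Ioo 0 d) : HasDerivAt φ (deriv φ x) x :=
  ((h.2.1.differentiableOn two_ne_zero).differentiableAt (isOpen_Ioo.mem_nhds hx)).hasDerivAt

theorem hasDerivAt_deriv (h : IsBVPSol Q f d φ) (hx : x ∈ Ioo 0 d) :
    HasDerivAt (deriv φ) (f (φ x)) x := by
  have h_C1 : ContDiffOn ℝ 1 (deriv φ) (Ioo 0 d) :=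
    h.2.1.deriv_of_isOpen isOpen_Ioo one_add_one_eq_two.le
  rw [← h.2.2.1 x hx]
  exact ((h_C1.differentiableOn one_ne_zero).differentiableAt
    (isOpen_Ioo.mem_nhds hx)).hasDerivAt

theorem exists_sq_deriv_div_two_eq_add (h : IsBVPSol Q f d φ) (hF : IsPositiveWork F f 0 Q) :
    ∃ c, EqOn (fun x => deriv φ x ^ 2 / 2) (fun x => F (φ x) + c) (Ioo 0 d) := by
  have h_kin : ∀ x ∈ Ioo 0 d,
      HasDerivAt (fun x => deriv φ x ^ 2 / 2) (f (φ x) * deriv φ x) x := fun x hx =>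
    (((h.hasDerivAt_deriv hx).pow 2).div_const 2).congr_deriv (by ring)
  have h_work : ∀ x ∈ Ioo 0 d, HasDerivAt (fun x => F (φ x)) (f (φ x) * deriv φ x) x :=
    fun x hx => (hF.hasDerivAt (φ x) (h.mapsTo hx)).comp x (h.hasDerivAt hx)
  exact isOpen_Ioo.exists_eq_add_of_deriv_eq isPreconnected_Ioo
    (fun x hx => (h_kin x hx).differentiableAt.differentiableWithinAt)
    (fun x hx => (h_work x hx).differentiableAt.differentiableWithinAt)
    (fun x hx => (h_kin x hx).deriv.trans (h_work x hx).deriv.symm)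

theorem work_le_sq_deriv_div_two (h : IsBVPSol Q f d φ) (hF : IsPositiveWork F f 0 Q)
    (hx : x ∈ Ioo 0 d) : F (φ x) - F 0 ≤ deriv φ x ^ 2 / 2 := by
  obtain ⟨c, hc⟩ := h.exists_sq_deriv_div_two_eq_add hF
  have hd : 0 < d := hx.1.trans hx.2
  have h_lim : Tendsto (fun y => F (φ y) + c) (𝓝[Ioo 0 d] 0) (𝓝 (F 0 + c)) := by
    have hφ : ContinuousWithinAt φ (Ioo 0 d) 0 :=
      (h.continuousOn 0 (left_mem_Icc.2 hd.le)).mono Ioo_subset_Icc_self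
    have hFφ := hF.continuousWithinAt.comp_of_eq hφ h.mapsTo h.map_zero
    simpa only [Function.comp_apply, h.map_zero] using hFφ.tendsto.add_const c
  have h_start : 0 ≤ F 0 + c := by
    have := left_nhdsWithin_Ioo_neBot hd
    refine ge_of_tendsto h_lim ?_
    filter_upwards [self_mem_nhdsWithin] with y hy
    exact (div_nonneg (sq_nonneg (deriv φ y)) zero_le_two).trans_eq (hc hy)
  linarith [hc hx]

theorem deriv_ne_zero (h : IsBVPSol Q f d φ) (hF : IsPositiveWork F f 0 Q) (hx : x ∈ Ioo 0 d) :
    deriv φ x ≠ 0 := by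
  intro h_zero
  have h_le := h.work_le_sq_deriv_div_two hF hx
  rw [h_zero] at h_le
  linarith [hF.lt (φ x) (h.mapsTo hx)]

theorem deriv_pos (h : IsBVPSol Q f d φ) (hF : IsPositiveWork F f 0 Q) (hx : x ∈ Ioo 0 d) :
    0 < deriv φ x := by
  have hd : 0 < d := hx.1.trans hx.2
  have hQ : 0 < Q := (h.mapsTo hx).1.trans (h.mapsTo hx).2
  obtain ⟨y, hy, hy_slope⟩ := exists_deriv_eq_slope φ hd h.continuousOn
    fun z hz => (h.hasDerivAt hz).differentiableAt.differentiableWithinAt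
  have hy_pos : 0 < deriv φ y := by
    rw [hy_slope, h.map_right, h.map_zero, sub_zero, sub_zero]
    exact div_pos hQ hd
  have h_sign := hasDerivWithinAt_forall_lt_or_forall_gt_of_forall_ne (convex_Ioo 0 d)
    (fun z hz => (h.hasDerivAt hz).hasDerivWithinAt) (fun z hz => h.deriv_ne_zero hF hz)
  exact h_sign.resolve_left (fun h_neg => (h_neg y hy).not_gt hy_pos) x hx

theorem exists_isPassage (h : IsBVPSol Q f d φ) (hF : IsPositiveWork F f 0 Q) (hd : 0 < d) :
    ∃ τ, IsPassage f φ τ 0 d 0 Q := by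
  have h_mono : StrictMonoOn φ (Icc 0 d) :=
    strictMonoOn_of_deriv_pos (convex_Icc 0 d) h.continuousOn
      (by rw [interior_Icc]; exact fun x hx => h.deriv_pos hF hx)
  exact ⟨Function.invFunOn φ (Icc 0 d), hd, h.map_zero, h.map_right,
    h_mono.injOn.leftInvOn_invFunOn, h.continuousOn, fun x hx => h.deriv_pos hF hx,
    fun x hx => h.hasDerivAt_deriv hx⟩

end IsBVPSol

theorem stmt13_general {Q d dt : ℝ} {f F φd φdt : ℝ → ℝ} (hF : IsPositiveWork F f 0 Q)
    (hddt : d < dt) (hφd : IsBVPSol Q f d φd) (hφdt : IsBVPSol Q f dt φdt) :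
    ∀ x ∈ Ioo 0 d, φdt x < φd x := by
  intro x hx
  have hd : 0 < d := hx.1.trans hx.2
  obtain ⟨τ, hτ⟩ := hφd.exists_isPassage hF hd
  obtain ⟨σ, hσ⟩ := hφdt.exists_isPassage hF (hd.trans hddt)
  exact hτ.lt_of_right_lt hσ hddt hx

section UnitProfile

/-- The solution `φ̄₁` on the unit interval, a motion which starts from rest at level `0`. -/
def unitProfile (Q t : ℝ) : ℝ := Q * (3 * t ^ 2 - 2 * t ^ 3)

variable {Q t : ℝ} {f κ : ℝ → ℝ}

theorem deriv_unitProfile : deriv (unitProfile Q) = fun t => 6 * Q * (t * (1 - t)) := by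
  funext t
  have h := (((hasDerivAt_pow 2 t).const_mul 3).sub ((hasDerivAt_pow 3 t).const_mul 2)).const_mul Q
  exact (h.congr_deriv (by ring)).deriv

theorem hasDerivAt_deriv_unitProfile :
    HasDerivAt (deriv (unitProfile Q)) (6 * Q * (1 - 2 * t)) t := by
  rw [deriv_unitProfile]
  refine (((hasDerivAt_id t).mul ((hasDerivAt_id t).const_sub 1)).const_mul (6 * Q)).congr_deriv ?_
  simp only [id]
  ring

theorem isPassage_unitProfile (hQ : 0 < Q) (hκ : LeftInvOn κ (unitProfile Q) (Icc 0 1))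
    (hf : ∀ s, f s = 6 * Q * (1 - 2 * κ s)) : IsPassage f (unitProfile Q) κ 0 1 0 Q where
  lt := zero_lt_one
  map_left := by norm_num [unitProfile]
  map_right := by norm_num [unitProfile]
  leftInvOn := hκ
  continuousOn := by unfold unitProfile; fun_prop
  deriv_pos t ht := by
    rw [deriv_unitProfile]
    exact mul_pos (by positivity) (mul_pos ht.1 (sub_pos.2 ht.2))
  hasDerivAt_deriv t ht := by
    rw [hf, hκ (Ioo_subset_Icc_self ht)]
    exact hasDerivAt_deriv_unitProfile

theorem isPositiveWork_unitProfile (hQ : 0 < Q) (hκ : LeftInvOn κ (unitProfile Q) (Icc 0 1))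
    (hf : ∀ s, f s = 6 * Q * (1 - 2 * κ s)) :
    IsPositiveWork (kineticEnergy (unitProfile Q) κ) f 0 Q :=
  (isPassage_unitProfile hQ hκ hf).isPositiveWork_kineticEnergy (by simp [deriv_unitProfile])
    hasDerivAt_deriv_unitProfile.continuousAt.continuousWithinAt

end UnitProfile

/-- Comparison of one-dimensional solutions on intervals of different lengths:
if `0 < d < d̃ ≤ 1` then `φ̄_d > φ̄_{d̃}` on `(0,d)`. -/
theorem stmt13
    (Q : ℝ) (hQ : 0 < Q)
    (κ : ℝ → ℝ) (hκ : ∀ t ∈ Set.Icc (0 : ℝ) 1, κ (Q * (3 * t ^ 2 - 2 * t ^ 3)) = t)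
    (f : ℝ → ℝ) (hf : ∀ s : ℝ, f s = 6 * Q * (1 - 2 * κ s))
    (d dt : ℝ) (hd : 0 < d) (hddt : d < dt) (hdt : dt ≤ 1)
    (φd φdt : ℝ → ℝ) (hφd : IsBVPSol Q f d φd) (hφdt : IsBVPSol Q f dt φdt) :
    ∀ x ∈ Set.Ioo (0 : ℝ) d, φdt x < φd x := by
  exact stmt13_general (isPositiveWork_unitProfile hQ hκ hf) hddt hφd hφdt
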